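/- Let p be a binary word with exactly 2 runs and of length l ≥ 3. For all n ≥ l + 2, B_{n,p}(M_{n,p} − 1) = 0; that is, no binary word of length n has exactly M_{n,p} − 1 occurrences of p. In particular, p has an internal zero at every n ≥ l + 2. -/

import Mathlib

/-- `occ p w` is the number of occurrences of `p` as a subsequence of `w`,
i.e. the number of choices of indices `i₁ < ⋯ < i_l` in `w` matching `p`. -/
def occ (p w : List Bool) : ℕ := w.sublists.count p

/-- `B n p k` is the number of binary words of length `n` with exactly `k` occurrences of `p`. -/
noncomputable def B (n : ℕ) (p : List Bool) (k : ℕ) : ℕ :=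
  Nat.card {w : List Bool // w.length = n ∧ occ p w = k}

/-- The list of runs (maximal blocks of consecutive equal letters) of a binary word. -/
def runs (p : List Bool) : List (List Bool) := p.splitBy (· == ·)

/-- The number of runs of a binary word. -/
def numRuns (p : List Bool) : ℕ := (runs p).length

/-- The number of runs of size `i` of a binary word. -/
def numRunsOfSize (p : List Bool) (i : ℕ) : ℕ := ((runs p).map List.length).count i

/-- `maxOcc n p` is the maximum number of occurrences of `p` among binary words of length `n`. -/
noncomputable def maxOcc (n : ℕ) (p : List Bool) : ℕ :=
  sSup {k | ∃ w : List Bool, w.length = n ∧ occ p w = k}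

/-- `p` has an internal zero at `n` if the sequence `(B n p k)_{k ≥ 0}` has an internal zero. -/
def HasInternalZeroAt (p : List Bool) (n : ℕ) : Prop :=
  ∃ k₁ k₂ k₃ : ℕ, k₁ < k₂ ∧ k₂ < k₃ ∧ B n p k₁ ≠ 0 ∧ B n p k₂ = 0 ∧ B n p k₃ ≠ 0

/-! Let `p = a^(r+1) b^(s+1)`, where `b` is the other letter. In a word with `x` letters `a` and `y`
letters `b`, an occurrence of `p` is an `(r+1)`-set of the `a`'s lying before an `(s+1)`-set of the
`b`'s. The sorted word `a^x b^y` therefore has `C(x, r+1) C(y, s+1)` occurrences, while in any other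
word some `b` precedes some `a`, and all the `C(x-1, r) C(y-1, s)` pairs of sets containing these
two letters are lost.

The maximum `M` is thus attained at a sorted word, and `M - 1` is missed for two reasons. An
unsorted word would have to lose exactly one occurrence from the maximum, but
`C(x-1, r) C(y-1, s) ≠ 1` at a maximizer. And along the sorted words of length `n` the counts are
unimodal, so attaining `M - 1` as well as `M` would force two neighbouring counts to differ by
exactly one. By an exchange identity, such a step makes `(r+1)(s+1)` a multiple of
`C(x, r) C(y, s)`; as `C(x, r) ≥ r+1` and `C(y, s) ≥ s+1`, this forces equality in both, which is
only possible for words that are too short. -/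

section Binomial

variable {r s x y X Y n : ℕ}

theorem add_one_le_choose (h : r < x) : r + 1 ≤ x.choose r := by
  simpa using Nat.choose_le_choose r (Nat.succ_le_of_lt h)

theorem add_one_lt_choose (hr : 0 < r) (h : r + 1 < x) : r + 1 < x.choose r := by
  obtain ⟨q, rfl⟩ := Nat.exists_eq_add_of_le' hr
  calc q + 1 + 1 < (q + 2).choose q + (q + 2).choose (q + 1) := by
        have hpos : 0 < (q + 2).choose q := Nat.choose_pos (by omega)
        have hsymm : (q + 2).choose (q + 1) = q + 2 := Nat.choose_succ_self_right (q + 1)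
        omega
    _ = (q + 3).choose (q + 1) := (Nat.choose_succ_succ' _ _).symm
    _ ≤ x.choose (q + 1) := Nat.choose_le_choose _ h

theorem eq_zero_or_eq_add_one_of_choose_eq (h : r < x) (hc : x.choose r = r + 1) :
    r = 0 ∨ x = r + 1 := by
  by_contra! hne
  exact (add_one_lt_choose (Nat.pos_of_ne_zero hne.1) (by omega)).ne' hc

-- With `V(x, y) = C(x, r+1) C(y, s+1)`, this is
-- `(r+1)(s+1) (V(x+1, y) - V(x, y+1)) = C(x, r) C(y, s) ((r+1)(y+1) - (s+1)(x+1))`,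
-- with terms moved so that no subtraction occurs.
theorem choose_mul_choose_exchange_identity (r s x y : ℕ) :
    (r + 1) * (s + 1) * ((x + 1).choose (r + 1) * y.choose (s + 1)) +
        (s + 1) * (x + 1) * (x.choose r * y.choose s) =
      (r + 1) * (s + 1) * (x.choose (r + 1) * (y + 1).choose (s + 1)) +
        (r + 1) * (y + 1) * (x.choose r * y.choose s) := by
  have hx := Nat.add_one_mul_choose_eq x r
  have hy := Nat.add_one_mul_choose_eq y s
  rw [Nat.choose_succ_succ'] at hx hy ⊢
  rw [Nat.choose_succ_succ' y s]
  linear_combination (s + 1) * y.choose s * hx - (r + 1) * x.choose r * hy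

theorem choose_mul_choose_exchange_le (h : (s + 1) * (x + 1) ≤ (r + 1) * (y + 1)) :
    x.choose (r + 1) * (y + 1).choose (s + 1) ≤ (x + 1).choose (r + 1) * y.choose (s + 1) := by
  have hexch := choose_mul_choose_exchange_identity r s x y
  have hle := Nat.mul_le_mul_right (x.choose r * y.choose s) h
  exact Nat.le_of_mul_le_mul_left (by omega) (show 0 < (r + 1) * (s + 1) by positivity)

theorem eq_and_add_one_eq_of_add_mul_eq {m k a b : ℕ} (hm : 0 < m) (hmk : m ≤ k)
    (h : m + a * k = b * k) : m = k ∧ a + 1 = b := by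
  have hab : a < b := Nat.lt_of_mul_lt_mul_right (show a * k < b * k by omega)
  have hk : (a + 1) * k ≤ b * k := Nat.mul_le_mul_right k hab
  rw [add_one_mul] at hk
  obtain rfl : m = k := by omega
  exact ⟨rfl, Nat.eq_of_mul_eq_mul_right hm (by linarith)⟩

theorem choose_mul_choose_exchange_ne_add_one (hrs : 1 ≤ r + s) (hxy : r + s + 3 ≤ x + y) :
    (x + 1).choose (r + 1) * y.choose (s + 1) ≠
      x.choose (r + 1) * (y + 1).choose (s + 1) + 1 := by
  intro h
  have hpos : (x + 1).choose (r + 1) * y.choose (s + 1) ≠ 0 := by omega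
  obtain ⟨hrx, hsy⟩ : r ≤ x ∧ s < y := by
    simpa [Nat.choose_eq_zero_iff, Nat.succ_le_iff] using hpos
  obtain rfl | hrx := hrx.eq_or_lt
  · have := add_one_le_choose (show s + 1 < y by omega)
    simp only [Nat.choose_self, Nat.choose_succ_self, one_mul, zero_mul, zero_add] at h
    omega
  have hexch := choose_mul_choose_exchange_identity r s x y
  set K := x.choose r * y.choose s
  have hcancel : (r + 1) * (s + 1) + (s + 1) * (x + 1) * K = (r + 1) * (y + 1) * K := by
    rw [h] at hexch
    linarith
  have hA := add_one_le_choose hrx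
  have hC := add_one_le_choose hsy
  obtain ⟨hAC, hlin⟩ := eq_and_add_one_eq_of_add_mul_eq (by positivity)
    (show (r + 1) * (s + 1) ≤ K from Nat.mul_le_mul hA hC) hcancel
  obtain ⟨hA', hC'⟩ :=
    (mul_eq_mul_iff_eq_and_eq_of_pos hA hC (by positivity) (by omega)).1 hAC
  rcases eq_zero_or_eq_add_one_of_choose_eq hrx hA'.symm with rfl | rfl <;>
    rcases eq_zero_or_eq_add_one_of_choose_eq hsy hC'.symm with rfl | rfl
  · omega
  · nlinarith
  · nlinarith
  · omega

theorem exists_unit_rise_of_no_rise_after_fall {f : ℕ → ℕ}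
    (hf : ∀ ⦃z w⦄, z ≤ w → f (z + 1) < f z → f (w + 1) ≤ f w)
    (hxX : x ≤ X) (hmax : ∀ z ≤ X, f z ≤ f X) (hx : f x + 1 = f X) :
    ∃ z < X, f (z + 1) = f z + 1 := by
  induction hxX using Nat.decreasingInduction with
  | self => omega
  | of_succ x hxX ih =>
    have hle := hmax (x + 1) hxX
    obtain hlt | heq | hgt := lt_trichotomy (f (x + 1)) (f x)
    · have hanti : ∀ k, x ≤ k → f k ≤ f x := fun k hk =>
        Nat.le_induction le_rfl (fun w hw ihw => (hf hw hlt).trans ihw) k hk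
      have := hanti X hxX.le
      omega
    · exact ih (by omega)
    · exact ⟨x, hxX, by omega⟩

theorem choose_mul_choose_sub_le_of_fall {z w : ℕ} (hzw : z ≤ w)
    (h : (z + 1).choose (r + 1) * (n - (z + 1)).choose (s + 1) <
      z.choose (r + 1) * (n - z).choose (s + 1)) :
    (w + 1).choose (r + 1) * (n - (w + 1)).choose (s + 1) ≤
      w.choose (r + 1) * (n - w).choose (s + 1) := by
  obtain hnw | hwn := le_or_gt n w
  · simp [Nat.sub_eq_zero_of_le (hnw.trans w.le_succ)]
  have hsucc : ∀ k < n, n - k = n - (k + 1) + 1 := by omega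
  rw [hsucc w hwn]
  rw [hsucc z (hzw.trans_lt hwn)] at h
  have hdesc : (r + 1) * (n - (z + 1) + 1) < (s + 1) * (z + 1) :=
    lt_of_not_ge fun hge => h.not_ge (choose_mul_choose_exchange_le hge)
  rw [mul_comm ((w + 1).choose _), mul_comm (w.choose _)]
  refine choose_mul_choose_exchange_le ?_
  calc (r + 1) * (n - (w + 1) + 1) ≤ (r + 1) * (n - (z + 1) + 1) := by gcongr
    _ ≤ (s + 1) * (z + 1) := hdesc.le
    _ ≤ (s + 1) * (w + 1) := by gcongr

theorem choose_mul_choose_add_one_ne_of_le (hrs : 1 ≤ r + s) (hn : r + s + 4 ≤ X + Y)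
    (hmax : ∀ x y, x + y = X + Y →
      x.choose (r + 1) * y.choose (s + 1) ≤ X.choose (r + 1) * Y.choose (s + 1))
    (hxy : x + y = X + Y) (hxX : x ≤ X) :
    x.choose (r + 1) * y.choose (s + 1) + 1 ≠ X.choose (r + 1) * Y.choose (s + 1) := by
  intro h
  obtain ⟨n, hnXY⟩ : ∃ n, n = X + Y := ⟨_, rfl⟩
  obtain rfl : y = n - x := by omega
  obtain rfl : Y = n - X := by omega
  obtain ⟨z, hzX, hz⟩ := exists_unit_rise_of_no_rise_after_fall
    (f := fun z => z.choose (r + 1) * (n - z).choose (s + 1))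
    (fun z w => choose_mul_choose_sub_le_of_fall) hxX (fun z hz => hmax z (n - z) (by omega)) h
  have hsucc : n - z = n - (z + 1) + 1 := by omega
  simp only [hsucc] at hz
  exact choose_mul_choose_exchange_ne_add_one hrs (by omega) hz

theorem choose_mul_choose_add_one_ne_of_max (hrs : 1 ≤ r + s) (hn : r + s + 4 ≤ X + Y)
    (hmax : ∀ x y, x + y = X + Y →
      x.choose (r + 1) * y.choose (s + 1) ≤ X.choose (r + 1) * Y.choose (s + 1))
    (hxy : x + y = X + Y) :
    x.choose (r + 1) * y.choose (s + 1) + 1 ≠ X.choose (r + 1) * Y.choose (s + 1) := by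
  obtain hxX | hXx := le_total x X
  · exact choose_mul_choose_add_one_ne_of_le hrs hn hmax hxy hxX
  · have hswap := choose_mul_choose_add_one_ne_of_le (r := s) (s := r) (x := y) (y := x)
      (X := Y) (Y := X) (by omega) (by omega)
      (fun y x hyx => by simpa only [mul_comm] using hmax x y (by omega)) (by omega) (by omega)
    simpa only [mul_comm] using hswap

theorem exists_one_lt_choose_mul_choose (hn : r + s + 3 ≤ n) :
    ∃ x y, x + y = n ∧ 1 < x.choose (r + 1) * y.choose (s + 1) := by
  refine ⟨r + 1, n - (r + 1), by omega, ?_⟩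
  have := add_one_le_choose (show s + 1 < n - (r + 1) by omega)
  rw [Nat.choose_self]
  omega

theorem choose_mul_choose_ne_one_of_max (hrs : 1 ≤ r + s) (hxy : r + s < x + y)
    (hmax : ∀ x' y', x' + y' = x + 1 + (y + 1) →
      x'.choose (r + 1) * y'.choose (s + 1) ≤ (x + 1).choose (r + 1) * (y + 1).choose (s + 1)) :
    x.choose r * y.choose s ≠ 1 := by
  intro hone
  rw [mul_eq_one, Nat.choose_eq_one_iff, Nat.choose_eq_one_iff] at hone
  obtain ⟨rfl | rfl, rfl | rfl⟩ := hone
  · omega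
  · have := hmax x (y + 2) (by omega)
    simp only [Nat.choose_self, Nat.choose_one_right, Nat.choose_succ_self_right, zero_add,
      mul_one] at this
    nlinarith
  · have := hmax (x + 2) y (by omega)
    simp only [Nat.choose_self, Nat.choose_one_right, Nat.choose_succ_self_right, zero_add,
      one_mul] at this
    nlinarith
  · omega

end Binomial

section Occurrences

theorem occ_nil (w : List Bool) : occ [] w = 1 := by
  induction w with
  | nil => rfl
  | cons d w ih =>
    have hmap : (w.sublists.map (List.cons d)).count [] = 0 := by simp [List.count_eq_zero]
    rw [occ, (List.sublists_cons_perm_append d w).count_eq, List.count_append, hmap]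
    exact ih

theorem occ_cons_nil (c : Bool) (p : List Bool) : occ (c :: p) [] = 0 := by
  simp [occ]

theorem occ_cons_cons_self (c : Bool) (p w : List Bool) :
    occ (c :: p) (c :: w) = occ p w + occ (c :: p) w := by
  rw [occ, (List.sublists_cons_perm_append c w).count_eq, List.count_append,
    List.count_map_of_injective _ _ List.cons_injective, add_comm, occ, occ]

theorem occ_cons_cons_of_ne {c d : Bool} (h : d ≠ c) (p w : List Bool) :
    occ (c :: p) (d :: w) = occ (c :: p) w := by
  have hmap : (w.sublists.map (List.cons d)).count (c :: p) = 0 := by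
    simp [List.count_eq_zero, h]
  rw [occ, (List.sublists_cons_perm_append d w).count_eq, List.count_append, hmap, add_zero, occ]

theorem occ_replicate (b : Bool) (s : ℕ) (w : List Bool) :
    occ (List.replicate s b) w = (w.count b).choose s := by
  induction w generalizing s with
  | nil => cases s <;> simp [List.replicate_succ, occ_nil, occ_cons_nil]
  | cons d w ih =>
    cases s with
    | zero => simp [occ_nil]
    | succ s =>
      obtain rfl | hdb := eq_or_ne d b
      · rw [List.replicate_succ, occ_cons_cons_self, ← List.replicate_succ, ih, ih,
          List.count_cons_self, Nat.choose_succ_succ']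
      · rw [List.replicate_succ, occ_cons_cons_of_ne hdb, ← List.replicate_succ, ih,
          List.count_cons_of_ne hdb]

theorem occ_le_two_pow_length (p w : List Bool) : occ p w ≤ 2 ^ w.length :=
  List.count_le_length.trans_eq (List.length_sublists w)

theorem bddAbove_occ (n : ℕ) (p : List Bool) :
    BddAbove {k | ∃ w : List Bool, w.length = n ∧ occ p w = k} := by
  refine ⟨2 ^ n, ?_⟩
  rintro _ ⟨w, rfl, rfl⟩
  exact occ_le_two_pow_length p w

theorem occ_le_maxOcc (p w : List Bool) : occ p w ≤ maxOcc w.length p :=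
  le_csSup (bddAbove_occ w.length p) ⟨w, rfl, rfl⟩

theorem exists_occ_eq_maxOcc (n : ℕ) (p : List Bool) :
    ∃ w : List Bool, w.length = n ∧ occ p w = maxOcc n p := by
  refine Nat.sSup_mem ?_ (bddAbove_occ n p)
  exact ⟨_, List.replicate n true, List.length_replicate, rfl⟩

theorem B_eq_zero_iff {n : ℕ} {p : List Bool} {k : ℕ} :
    B n p k = 0 ↔ ∀ w : List Bool, w.length = n → occ p w ≠ k := by
  have : Finite {w : List Bool // w.length = n ∧ occ p w = k} :=
    ((List.finite_length_eq Bool n).inter_of_left {w | occ p w = k}).to_subtype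
  rw [B, Finite.card_eq_zero_iff, isEmpty_subtype]
  simp only [not_and, ne_eq]

end Occurrences

/-- The sorted word `a^r b^s`, where `b` is the letter different from `a`. Up to the choice of `a`,
these are the words with at most two runs. -/
def twoRun (a : Bool) (r s : ℕ) : List Bool :=
  List.replicate r a ++ List.replicate s (!a)

section TwoRun

variable (a : Bool) (r s x y : ℕ) (w : List Bool)

theorem length_twoRun : (twoRun a r s).length = r + s := by
  simp [twoRun]

theorem twoRun_succ : twoRun a (r + 1) s = a :: twoRun a r s := by
  simp [twoRun, List.replicate_succ]

theorem count_self_twoRun : (twoRun a x y).count a = x := by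
  simp [twoRun, List.count_replicate]

theorem count_not_twoRun : (twoRun a x y).count (!a) = y := by
  simp [twoRun, List.count_replicate]

theorem exists_eq_replicate_succ {l : List Bool} (hne : l ≠ [])
    (h : l.IsChain fun c d => c == d) : ∃ a r, l = List.replicate (r + 1) a := by
  obtain ⟨a, t, rfl⟩ := List.exists_cons_of_ne_nil hne
  simp only [beq_iff_eq, List.isChain_cons_eq_iff_eq_replicate] at h
  exact ⟨a, t.length, by rw [List.replicate_succ, ← h]⟩

theorem exists_eq_twoRun_of_numRuns_eq_two {p : List Bool} (hp : numRuns p = 2) :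
    ∃ a r s, p = twoRun a (r + 1) (s + 1) := by
  obtain ⟨u, v, huv⟩ := List.length_eq_two.1 hp
  obtain ⟨rfl, hne, hconst, hchange⟩ := List.splitBy_eq_iff.1 huv
  simp only [List.mem_cons, List.not_mem_nil, or_false, not_or] at hne
  obtain ⟨a, r, rfl⟩ := exists_eq_replicate_succ (Ne.symm hne.1) (hconst u (by simp))
  obtain ⟨b, s, rfl⟩ := exists_eq_replicate_succ (Ne.symm hne.2) (hconst v (by simp))
  have hab : a ≠ b := by simpa using hchange
  obtain rfl : b = !a := Bool.eq_not_of_ne hab.symm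
  exact ⟨a, r, s, by simp [twoRun]⟩

theorem occ_twoRun_zero : occ (twoRun a 0 s) w = (w.count (!a)).choose s := by
  simp [twoRun, occ_replicate]

theorem occ_twoRun_succ_nil : occ (twoRun a (r + 1) s) [] = 0 := by
  rw [twoRun_succ, occ_cons_nil]

theorem occ_twoRun_succ_cons_self : occ (twoRun a (r + 1) s) (a :: w) =
    occ (twoRun a r s) w + occ (twoRun a (r + 1) s) w := by
  rw [twoRun_succ, occ_cons_cons_self]

theorem occ_twoRun_succ_cons_not :
    occ (twoRun a (r + 1) s) ((!a) :: w) = occ (twoRun a (r + 1) s) w := by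
  rw [twoRun_succ, occ_cons_cons_of_ne (by simp)]

theorem occ_twoRun_le :
    occ (twoRun a r s) w ≤ (w.count a).choose r * (w.count (!a)).choose s := by
  induction w generalizing r with
  | nil => cases r <;> simp [occ_twoRun_zero, occ_twoRun_succ_nil]
  | cons d w ih =>
    cases r with
    | zero => simp [occ_twoRun_zero]
    | succ r =>
      obtain rfl | rfl := Bool.eq_or_eq_not d a
      · rw [occ_twoRun_succ_cons_self, List.count_cons_self, List.count_cons_of_ne (by simp),
          Nat.choose_succ_succ', add_mul]
        exact add_le_add (ih r) (ih (r + 1))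
      · rw [occ_twoRun_succ_cons_not, List.count_cons_self, List.count_cons_of_ne (by simp)]
        exact (ih (r + 1)).trans (by gcongr; omega)

theorem occ_twoRun_twoRun :
    occ (twoRun a r s) (twoRun a x y) = x.choose r * y.choose s := by
  induction x generalizing r with
  | zero =>
    cases r with
    | zero => simp [occ_twoRun_zero, count_not_twoRun]
    | succ r =>
      simpa [count_self_twoRun] using occ_twoRun_le a (r + 1) s (twoRun a 0 y)
  | succ x ih =>
    cases r with
    | zero => simp [occ_twoRun_zero, count_not_twoRun]
    | succ r =>
      rw [twoRun_succ a x, occ_twoRun_succ_cons_self, ih, ih, Nat.choose_succ_succ', add_mul]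

theorem eq_twoRun_or_sublist :
    w = twoRun a (w.count a) (w.count (!a)) ∨ [!a, a].Sublist w := by
  induction w with
  | nil => exact .inl rfl
  | cons d w ih =>
    obtain rfl | rfl := Bool.eq_or_eq_not d a
    · refine ih.imp (fun h => ?_) (fun h => h.cons _)
      rw [List.count_cons_self, List.count_cons_of_ne (by simp), twoRun_succ, ← h]
    · by_cases ha : a ∈ w
      · exact .inr (List.cons_sublist_cons.2 (List.singleton_sublist.2 ha))
      · have hw : ∀ d ∈ w, d = !a := fun d hd =>
          Bool.eq_not_of_ne fun hda => ha (hda ▸ hd)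
        obtain ⟨k, rfl⟩ : ∃ k, w = List.replicate k (!a) := ⟨_, List.eq_replicate_of_mem hw⟩
        simp [twoRun, List.count_replicate, List.replicate_succ]

theorem occ_twoRun_add_choose_mul_choose_le (h : [!a, a].Sublist w) :
    occ (twoRun a (r + 1) (s + 1)) w +
        (w.count a - 1).choose r * (w.count (!a) - 1).choose s ≤
      (w.count a).choose (r + 1) * (w.count (!a)).choose (s + 1) := by
  induction w generalizing r with
  | nil => simp at h
  | cons d w ih =>
    obtain rfl | rfl := Bool.eq_or_eq_not d a
    · have hw : [!d, d].Sublist w := by simpa [List.sublist_cons_iff] using h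
      obtain ⟨x, hx⟩ : ∃ x, w.count d = x + 1 :=
        Nat.exists_eq_add_of_le' (List.count_pos_iff.2 (hw.subset (by simp)))
      rw [occ_twoRun_succ_cons_self, List.count_cons_self, List.count_cons_of_ne (by simp), hx,
        Nat.choose_succ_succ' (x + 1) r, add_mul, add_assoc]
      cases r with
      | zero =>
        have hle := occ_twoRun_le d 0 (s + 1) w
        have ih₁ := ih 0 hw
        simp only [hx, Nat.choose_zero_right, Nat.add_sub_cancel] at hle ih₁ ⊢
        exact add_le_add hle ih₁
      | succ r =>
        have ih₁ := ih r hw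
        have ih₂ := ih (r + 1) hw
        simp only [hx, Nat.add_sub_cancel, Nat.choose_succ_succ' x r, add_mul] at ih₁ ih₂ ⊢
        omega
    · have ha : a ∈ w := List.singleton_sublist.1 (List.cons_sublist_cons.1 h)
      obtain ⟨x, hx⟩ : ∃ x, w.count a = x + 1 :=
        Nat.exists_eq_add_of_le' (List.count_pos_iff.2 ha)
      have hle := occ_twoRun_le a (r + 1) (s + 1) w
      have hchoose : x.choose r ≤ (x + 1).choose (r + 1) :=
        Nat.le_add_right _ _
      have hloss := Nat.mul_le_mul_right ((w.count (!a)).choose s) hchoose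
      rw [occ_twoRun_succ_cons_not, List.count_cons_self, List.count_cons_of_ne (by simp), hx,
        Nat.choose_succ_succ' (w.count (!a)) s, mul_add]
      rw [hx] at hle
      simp only [Nat.add_sub_cancel]
      omega

theorem choose_mul_choose_le_maxOcc :
    x.choose r * y.choose s ≤ maxOcc (x + y) (twoRun a r s) := by
  rw [← occ_twoRun_twoRun a, ← length_twoRun a x y]
  exact occ_le_maxOcc _ _

theorem exists_choose_mul_choose_eq_maxOcc (n : ℕ) :
    ∃ x y, x + y = n ∧ x.choose r * y.choose s = maxOcc n (twoRun a r s) := by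
  obtain ⟨w, rfl, hw⟩ := exists_occ_eq_maxOcc n (twoRun a r s)
  have hlen := List.count_add_count_not w a
  refine ⟨_, _, hlen, le_antisymm ?_ (hw ▸ occ_twoRun_le a r s w)⟩
  rw [← hlen]
  exact choose_mul_choose_le_maxOcc a r s _ _

variable {r s}

theorem one_lt_maxOcc {n : ℕ} (hn : r + s + 3 ≤ n) :
    1 < maxOcc n (twoRun a (r + 1) (s + 1)) := by
  obtain ⟨x, y, rfl, hlt⟩ := exists_one_lt_choose_mul_choose hn
  exact hlt.trans_le (choose_mul_choose_le_maxOcc a _ _ x y)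

theorem occ_add_one_ne_maxOcc_of_sublist (hrs : 1 ≤ r + s) (hw : r + s + 3 ≤ w.length)
    (h : [!a, a].Sublist w) :
    occ (twoRun a (r + 1) (s + 1)) w + 1 ≠ maxOcc w.length (twoRun a (r + 1) (s + 1)) := by
  intro hocc
  have hloss := occ_twoRun_add_choose_mul_choose_le a r s w h
  have hlen := List.count_add_count_not w a
  obtain ⟨x, hx⟩ : ∃ x, w.count a = x + 1 :=
    Nat.exists_eq_add_of_le' (List.count_pos_iff.2 (h.subset (by simp)))
  obtain ⟨y, hy⟩ : ∃ y, w.count (!a) = y + 1 :=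
    Nat.exists_eq_add_of_le' (List.count_pos_iff.2 (h.subset (by simp)))
  simp only [hx, hy, Nat.add_sub_cancel] at hloss hlen
  rw [← hlen] at hw hocc
  have hone := one_lt_maxOcc a hw
  have hle := choose_mul_choose_le_maxOcc a (r + 1) (s + 1) (x + 1) (y + 1)
  have hpos : x.choose r * y.choose s ≠ 0 := by
    have : (x + 1).choose (r + 1) * (y + 1).choose (s + 1) ≠ 0 := by omega
    simpa [Nat.choose_eq_zero_iff] using this
  refine choose_mul_choose_ne_one_of_max hrs (by omega) (fun x' y' hxy => ?_)
    (show x.choose r * y.choose s = 1 by omega)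
  have := choose_mul_choose_le_maxOcc a (r + 1) (s + 1) x' y'
  rw [hxy] at this
  omega

theorem occ_add_one_ne_maxOcc (hrs : 1 ≤ r + s) (hw : r + s + 4 ≤ w.length) :
    occ (twoRun a (r + 1) (s + 1)) w + 1 ≠ maxOcc w.length (twoRun a (r + 1) (s + 1)) := by
  obtain h | h := eq_twoRun_or_sublist a w
  · have hlen := List.count_add_count_not w a
    obtain ⟨X, Y, hXY, hmax⟩ := exists_choose_mul_choose_eq_maxOcc a (r + 1) (s + 1) w.length
    rw [h, occ_twoRun_twoRun, ← h, ← hmax]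
    refine choose_mul_choose_add_one_ne_of_max hrs (by omega) (fun x y hxy => ?_) (by omega)
    rw [hmax, ← hXY, ← hxy]
    exact choose_mul_choose_le_maxOcc a _ _ x y
  · exact occ_add_one_ne_maxOcc_of_sublist a w hrs (Nat.le_of_succ_le hw) h

end TwoRun

theorem two_runs_B_max_sub_one (p : List Bool) (l : ℕ) (hl : p.length = l)
    (hr : numRuns p = 2) (hl3 : 3 ≤ l) (n : ℕ) (hn : l + 2 ≤ n) :
    B n p (maxOcc n p - 1) = 0 ∧ HasInternalZeroAt p n := by
  obtain ⟨a, r, s, rfl⟩ := exists_eq_twoRun_of_numRuns_eq_two hr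
  rw [length_twoRun] at hl
  have hmax : 1 < maxOcc n (twoRun a (r + 1) (s + 1)) := one_lt_maxOcc a (by omega)
  have hzero : B n (twoRun a (r + 1) (s + 1)) (maxOcc n (twoRun a (r + 1) (s + 1)) - 1) = 0 := by
    rw [B_eq_zero_iff]
    rintro w rfl hocc
    have := occ_add_one_ne_maxOcc (r := r) (s := s) a w (by omega) (by omega)
    omega
  obtain ⟨w, hw, hocc⟩ := exists_occ_eq_maxOcc n (twoRun a (r + 1) (s + 1))
  refine ⟨hzero, 0, _, _, Nat.sub_pos_of_lt hmax, Nat.sub_one_lt_of_lt hmax, ?_, hzero, ?_⟩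
  · exact fun h => B_eq_zero_iff.1 h (twoRun a n 0) (length_twoRun a n 0)
      (by simp [occ_twoRun_twoRun])
  · exact fun h => B_eq_zero_iff.1 h w hw hocc
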